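/- arXiv:2406.13980 — 2 statements merged into one kernel-verified Lean document; each statement's English description precedes it below -/
import Mathlib

section
/- Let R be a commutative ring, k ≥ 1, s ∈ R, β ∈ R^k a column vector, and H a symmetric k×k matrix over R. Let M be the symmetric (k+1)×(k+1) block matrix [[s, βᵀ], [β, H]], and define X₊ := [[s, 0], [β, s·I_k]] and X₋ := [[s, 0], [−β, s·I_k]] (block lower-triangular (k+1)×(k+1) matrices). Then: (i) X₋·X₊ = X₊·X₋ = s²·I_{k+1}; (ii) X₋·M·X₋ᵀ equals the block-diagonal matrix with blocks s³ and s·(s·H − β·βᵀ); (iii) s⁴·M = X₊·D·X₊ᵀ, where D is the block-diagonal matrix with blocks s³ and s·(s·H − β·βᵀ). -/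
open Matrix

/-! Multiplying on the left by `X₋` eliminates the first block column below the pivot, and
multiplying on the right by `X₋ᵀ` eliminates the first block row: this is Gaussian elimination with
every row scaled by `s`, so that no division occurs. Since `X₊` inverts `X₋` up to the scalar `s²`,
undoing the elimination costs `s²` on either side, whence the factor `s⁴`. -/

section Pivot

variable {R m n p : Type*} [CommRing R] [DecidableEq m]

/-- The matrix `[[s I, Cᵀ], [B, H]]` to be pivoted. The off-diagonal blocks `B` and `C` are
independent and `H` may be rectangular; the symmetric matrix `M` is the case `C = B = β`, a
single column, with `H` symmetric. -/
def pivotMatrix (s : R) (B : Matrix n m R) (C : Matrix p m R) (H : Matrix n p R) :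
    Matrix (m ⊕ n) (m ⊕ p) R :=
  fromBlocks (s • 1) Cᵀ B H

/-- The block lower triangular factor `[[s I, 0], [B, s I]]` of the pivoting construction:
`X₊` is `pivotFactor s B` and `X₋` is `pivotFactor s (-B)`. -/
def pivotFactor [DecidableEq n] (s : R) (B : Matrix n m R) : Matrix (m ⊕ n) (m ⊕ n) R :=
  fromBlocks (s • 1) 0 B (s • 1)

/-- The block diagonal matrix left by pivoting. Its second block is, up to the factor `s²`, the
Schur complement `H - s⁻¹ B Cᵀ`, with denominators cleared. -/
def pivotDiagonal [Fintype m] (s : R) (B : Matrix n m R) (C : Matrix p m R) (H : Matrix n p R) :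
    Matrix (m ⊕ n) (m ⊕ p) R :=
  fromBlocks (s ^ 3 • 1) 0 0 (s • (s • H - B * Cᵀ))

variable [Fintype m]

section Factor

variable [Fintype n] [DecidableEq n]

theorem pivotFactor_mul_pivotFactor (s : R) (B B' : Matrix n m R) :
    pivotFactor s B * pivotFactor s B' =
      fromBlocks (s ^ 2 • 1) 0 (s • (B + B')) (s ^ 2 • 1) := by
  simp [pivotFactor, fromBlocks_multiply, smul_smul, sq]

theorem pivotFactor_mul_pivotFactor_neg (s : R) (B : Matrix n m R) :
    pivotFactor s B * pivotFactor s (-B) = s ^ 2 • (1 : Matrix (m ⊕ n) (m ⊕ n) R) := by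
  rw [pivotFactor_mul_pivotFactor, add_neg_cancel, smul_zero, ← fromBlocks_one, fromBlocks_smul,
    smul_zero, smul_zero]

theorem pivotFactor_neg_mul_pivotFactor (s : R) (B : Matrix n m R) :
    pivotFactor s (-B) * pivotFactor s B = s ^ 2 • (1 : Matrix (m ⊕ n) (m ⊕ n) R) := by
  simpa only [neg_neg] using pivotFactor_mul_pivotFactor_neg s (-B)

theorem pivotFactor_neg_mul_pivotMatrix (s : R) (B : Matrix n m R) (C : Matrix p m R)
    (H : Matrix n p R) :
    pivotFactor s (-B) * pivotMatrix s B C H =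
      fromBlocks (s ^ 2 • 1) (s • Cᵀ) 0 (s • H - B * Cᵀ) := by
  simp [pivotFactor, pivotMatrix, fromBlocks_multiply, smul_smul, sq, neg_add_eq_sub]

end Factor

theorem fromBlocks_mul_pivotFactor_neg_transpose [Fintype p] [DecidableEq p] (s : R)
    (C : Matrix p m R) (S : Matrix n p R) :
    fromBlocks (s ^ 2 • (1 : Matrix m m R)) (s • Cᵀ) 0 S * (pivotFactor s (-C))ᵀ =
      fromBlocks (s ^ 3 • 1) 0 0 (s • S) := by
  simp [pivotFactor, fromBlocks_transpose, fromBlocks_multiply, smul_smul, ← sq,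
    ← pow_succ']

variable [Fintype n] [DecidableEq n] [Fintype p] [DecidableEq p]

theorem pivotFactor_neg_mul_pivotMatrix_mul_transpose (s : R) (B : Matrix n m R)
    (C : Matrix p m R) (H : Matrix n p R) :
    pivotFactor s (-B) * pivotMatrix s B C H * (pivotFactor s (-C))ᵀ = pivotDiagonal s B C H := by
  rw [pivotFactor_neg_mul_pivotMatrix, fromBlocks_mul_pivotFactor_neg_transpose, pivotDiagonal]

theorem smul_pivotMatrix_eq_mul_pivotDiagonal_mul_transpose (s : R) (B : Matrix n m R)
    (C : Matrix p m R) (H : Matrix n p R) :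
    s ^ 4 • pivotMatrix s B C H = pivotFactor s B * pivotDiagonal s B C H * (pivotFactor s C)ᵀ :=
  calc
    s ^ 4 • pivotMatrix s B C H
      = (s ^ 2 • (1 : Matrix (m ⊕ n) (m ⊕ n) R)) * pivotMatrix s B C H *
          (s ^ 2 • (1 : Matrix (m ⊕ p) (m ⊕ p) R))ᵀ := by
        simp [smul_smul, ← pow_add]
    _ = (pivotFactor s B * pivotFactor s (-B)) * pivotMatrix s B C H *
          (pivotFactor s C * pivotFactor s (-C))ᵀ := by
        rw [pivotFactor_mul_pivotFactor_neg, pivotFactor_mul_pivotFactor_neg]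
    _ = pivotFactor s B * (pivotFactor s (-B) * pivotMatrix s B C H * (pivotFactor s (-C))ᵀ) *
          (pivotFactor s C)ᵀ := by
        simp only [transpose_mul, Matrix.mul_assoc]
    _ = pivotFactor s B * pivotDiagonal s B C H * (pivotFactor s C)ᵀ := by
        rw [pivotFactor_neg_mul_pivotMatrix_mul_transpose]

theorem block_pivot_identities_general (s : R) (B : Matrix n m R) (C : Matrix p m R)
    (H : Matrix n p R) :
    pivotFactor s (-B) * pivotFactor s B = s ^ 2 • (1 : Matrix (m ⊕ n) (m ⊕ n) R) ∧
    pivotFactor s B * pivotFactor s (-B) = s ^ 2 • (1 : Matrix (m ⊕ n) (m ⊕ n) R) ∧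
    pivotFactor s (-B) * pivotMatrix s B C H * (pivotFactor s (-C))ᵀ = pivotDiagonal s B C H ∧
    s ^ 4 • pivotMatrix s B C H = pivotFactor s B * pivotDiagonal s B C H * (pivotFactor s C)ᵀ :=
  ⟨pivotFactor_neg_mul_pivotFactor s B, pivotFactor_mul_pivotFactor_neg s B,
    pivotFactor_neg_mul_pivotMatrix_mul_transpose s B C H,
    smul_pivotMatrix_eq_mul_pivotDiagonal_mul_transpose s B C H⟩

end Pivot

theorem of_const_eq_smul_one {R ι : Type*} [Semiring R] [Unique ι] [DecidableEq ι] (c : R) :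
    (of fun _ _ => c : Matrix ι ι R) = c • 1 := by
  rw [smul_one_eq_diagonal, diagonal_unique]

theorem of_mul_eq_replicateCol_mul_transpose {R n p : Type*} (ι : Type*) [Unique ι]
    [NonUnitalNonAssocSemiring R] (β : n → R) (γ : p → R) :
    (of fun i j => β i * γ j) = replicateCol ι β * (replicateCol ι γ)ᵀ :=
  vecMulVec_eq ι β γ

/-- block identities for the symmetric pivoting construction used in
Schmüdgen's scalar description of matrix inequalities. -/
theorem block_pivot_identities (R : Type*) [CommRing R] (k : ℕ) (hk : 1 ≤ k)
    (s : R) (β : Fin k → R) (H : Matrix (Fin k) (Fin k) R) (hH : H.IsSymm) :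
    let M : Matrix (Fin 1 ⊕ Fin k) (Fin 1 ⊕ Fin k) R :=
      Matrix.fromBlocks (Matrix.of fun _ _ => s) (Matrix.of fun _ j => β j)
        (Matrix.of fun i _ => β i) H
    let Xp : Matrix (Fin 1 ⊕ Fin k) (Fin 1 ⊕ Fin k) R :=
      Matrix.fromBlocks (Matrix.of fun _ _ => s) 0 (Matrix.of fun i _ => β i) (s • 1)
    let Xm : Matrix (Fin 1 ⊕ Fin k) (Fin 1 ⊕ Fin k) R :=
      Matrix.fromBlocks (Matrix.of fun _ _ => s) 0 (Matrix.of fun i _ => -β i) (s • 1)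
    let D : Matrix (Fin 1 ⊕ Fin k) (Fin 1 ⊕ Fin k) R :=
      Matrix.fromBlocks (Matrix.of fun _ _ => s ^ 3) 0 0
        (s • (s • H - Matrix.of fun i j => β i * β j))
    Xm * Xp = s ^ 2 • (1 : Matrix (Fin 1 ⊕ Fin k) (Fin 1 ⊕ Fin k) R) ∧
    Xp * Xm = s ^ 2 • (1 : Matrix (Fin 1 ⊕ Fin k) (Fin 1 ⊕ Fin k) R) ∧
    Xm * M * Xmᵀ = D ∧
    s ^ 4 • M = Xp * D * Xpᵀ := by
  simp only [of_const_eq_smul_one, of_mul_eq_replicateCol_mul_transpose (Fin 1)]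
  exact block_pivot_identities_general s (replicateCol (Fin 1) β) (replicateCol (Fin 1) β) H
end

section
/- For every real number ε, the minimum of (x − ε·x₀)² + x₀² over all (x₀, x) ∈ ℝ² with x₀² + x² = 1 equals 1 + ε²/2 − √(ε² + ε⁴/4). In particular, this minimum value tends to 0 as ε → ∞, while it is always positive. -/
open Filter

/-! On the unit circle a binary quadratic form is an affine function of the double angle: with
`z = x + y * I` and `w = (a - c) / 2 + b * I`,
`a * x ^ 2 + 2 * b * x * y + c * y ^ 2 = (a + c) / 2 + ⟪w, z ^ 2⟫`.
Squaring maps the circle onto itself, so the minimum is `(a + c) / 2 - ‖w‖`. Minimum and maximum are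
the eigenvalues of the form, and its determinant is `(1 + ε ^ 2) * 1 - (-ε) ^ 2 = 1`; hence the
minimum is the inverse of the maximum, which is at least `1 + ε ^ 2 / 2`. -/

open scoped RealInnerProductSpace

theorem isLeast_inner_image_sphere {E : Type*} [NormedAddCommGroup E] [InnerProductSpace ℝ E]
    [Nontrivial E] (w : E) : IsLeast ((fun z ↦ ⟪w, z⟫) '' Metric.sphere 0 1) (-‖w‖) := by
  constructor
  · rcases eq_or_ne w 0 with rfl | hw
    · obtain ⟨z, hz⟩ := exists_norm_eq E zero_le_one
      exact ⟨z, by simpa using hz, by simp⟩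
    · refine ⟨-(‖w‖⁻¹ • w), by simp [norm_smul, hw], ?_⟩
      simp only [inner_neg_right, inner_smul_right, real_inner_self_eq_norm_sq]
      field_simp
  · rintro _ ⟨z, hz, rfl⟩
    have cauchy_schwarz : |⟪w, z⟫| ≤ ‖w‖ := by
      simpa [mem_sphere_zero_iff_norm.mp hz] using abs_real_inner_le_norm w z
    exact neg_le_of_abs_le cauchy_schwarz

theorem image_pow_sphere_zero_one {𝕜 : Type*} [NormedField 𝕜] [IsAlgClosed 𝕜] {n : ℕ}
    (hn : 0 < n) : (· ^ n) '' Metric.sphere (0 : 𝕜) 1 = Metric.sphere 0 1 := by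
  ext u
  simp only [Set.mem_image, mem_sphere_zero_iff_norm]
  constructor
  · rintro ⟨z, hz, rfl⟩
    simp [hz]
  · intro hu
    obtain ⟨z, rfl⟩ := IsAlgClosed.exists_pow_nat_eq u hn
    exact ⟨z, (pow_eq_one_iff_of_nonneg (norm_nonneg z) hn.ne').mp (by rwa [← norm_pow]), rfl⟩

theorem binary_form_eq_add_inner_sq (a b c : ℝ) {x y : ℝ} (h : x ^ 2 + y ^ 2 = 1) :
    a * x ^ 2 + 2 * b * x * y + c * y ^ 2 =
      (a + c) / 2 + ⟪(⟨(a - c) / 2, b⟩ : ℂ), (⟨x, y⟩ : ℂ) ^ 2⟫ := by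
  simp only [Complex.inner, sq, Complex.mul_re, Complex.mul_im, Complex.conj_re, Complex.conj_im]
  linear_combination (a + c) / 2 * h

theorem isLeast_binary_form_on_circle (a b c : ℝ) :
    IsLeast {r : ℝ | ∃ x y : ℝ, x ^ 2 + y ^ 2 = 1 ∧ r = a * x ^ 2 + 2 * b * x * y + c * y ^ 2}
      ((a + c) / 2 - √(((a - c) / 2) ^ 2 + b ^ 2)) := by
  have mem_sphere_iff (x y : ℝ) : (⟨x, y⟩ : ℂ) ∈ Metric.sphere 0 1 ↔ x ^ 2 + y ^ 2 = 1 := by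
    simp [Complex.norm_eq_sqrt_sq_add_sq]
  obtain ⟨⟨u, hu, hmin⟩, hlower⟩ := isLeast_inner_image_sphere (⟨(a - c) / 2, b⟩ : ℂ)
  simp only [Complex.norm_eq_sqrt_sq_add_sq] at hmin hlower
  constructor
  · rw [← image_pow_sphere_zero_one two_pos] at hu
    obtain ⟨⟨x, y⟩, hz, rfl⟩ := hu
    have h := (mem_sphere_iff x y).mp hz
    exact ⟨x, y, h, by rw [binary_form_eq_add_inner_sq a b c h, hmin, sub_eq_add_neg]⟩
  · rintro _ ⟨x, y, h, rfl⟩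
    have hsq : (⟨x, y⟩ : ℂ) ^ 2 ∈ Metric.sphere 0 1 := by
      rw [← image_pow_sphere_zero_one two_pos]
      exact Set.mem_image_of_mem _ ((mem_sphere_iff x y).mpr h)
    rw [binary_form_eq_add_inner_sq a b c h, sub_eq_add_neg]
    gcongr
    exact hlower (Set.mem_image_of_mem _ hsq)

theorem sub_sqrt_eq_inv_add_sqrt {a b : ℝ} (hb : 0 ≤ b) (h : a ^ 2 - b = 1) :
    a - √b = (a + √b)⁻¹ :=
  eq_inv_of_mul_eq_one_left (by linear_combination h - Real.sq_sqrt hb)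

theorem homogenization_min_eq_inv (ε : ℝ) :
    1 + ε ^ 2 / 2 - √(ε ^ 2 + ε ^ 4 / 4) = (1 + ε ^ 2 / 2 + √(ε ^ 2 + ε ^ 4 / 4))⁻¹ :=
  sub_sqrt_eq_inv_add_sqrt (by positivity) (by ring)

theorem tendsto_homogenization_max_atTop :
    Tendsto (fun ε : ℝ ↦ 1 + ε ^ 2 / 2 + √(ε ^ 2 + ε ^ 4 / 4)) atTop atTop := by
  have hsq : Tendsto (fun ε : ℝ ↦ ε ^ 2 / 2) atTop atTop :=
    (tendsto_pow_atTop two_ne_zero).atTop_div_const two_pos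
  exact (tendsto_atTop_add_const_left _ 1 hsq).atTop_add_nonneg fun ε ↦ Real.sqrt_nonneg _

/-- the minimum of the homogenization of `(x-ε)²+1` on the unit circle. -/
theorem min_homogenization_on_circle :
    (∀ ε : ℝ,
      IsLeast {r : ℝ | ∃ x₀ x : ℝ, x₀ ^ 2 + x ^ 2 = 1 ∧ r = (x - ε * x₀) ^ 2 + x₀ ^ 2}
        (1 + ε ^ 2 / 2 - Real.sqrt (ε ^ 2 + ε ^ 4 / 4)) ∧
      0 < 1 + ε ^ 2 / 2 - Real.sqrt (ε ^ 2 + ε ^ 4 / 4)) ∧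
    Tendsto (fun ε : ℝ => 1 + ε ^ 2 / 2 - Real.sqrt (ε ^ 2 + ε ^ 4 / 4)) atTop (nhds 0) := by
  refine ⟨fun ε ↦ ⟨?_, ?_⟩, ?_⟩
  · have expand (x₀ x : ℝ) : (x - ε * x₀) ^ 2 + x₀ ^ 2 =
        (1 + ε ^ 2) * x₀ ^ 2 + 2 * (-ε) * x₀ * x + 1 * x ^ 2 := by ring
    have min_eq : 1 + ε ^ 2 / 2 - √(ε ^ 2 + ε ^ 4 / 4) =
        (1 + ε ^ 2 + 1) / 2 - √(((1 + ε ^ 2 - 1) / 2) ^ 2 + (-ε) ^ 2) := by ring_nf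
    simp only [expand, min_eq]
    exact isLeast_binary_form_on_circle (1 + ε ^ 2) (-ε) 1
  · rw [homogenization_min_eq_inv]
    positivity
  · simp only [homogenization_min_eq_inv]
    exact tendsto_homogenization_max_atTop.inv_tendsto_atTop
end
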